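/- ε-Direct theorem (Theorem 5.1). Let V = {Vⁿ} be a general source, W = {Wⁿ} a general channel, and 0 ≤ ε < 1. Suppose there exist a channel input X = {Xⁿ} (possibly correlated with the source) and a sequence {γₙ} with γₙ > 0, γₙ → 0, nγₙ → ∞, such that limsupₙ Pr{ (1/n) log( Wⁿ(Yⁿ|Xⁿ)/P_{Yⁿ}(Yⁿ) ) ≤ (1/n) log( 1/P_{Vⁿ}(Vⁿ) ) + γₙ } ≤ ε, where Yⁿ is the channel output due to input Xⁿ. Then V is ε-transmissible over W. -/

import Mathlib

open Filter Real Topology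

namespace ISC

/-- Words of length `n` over alphabet `A`. -/
abbrev Word (A : Type*) (n : ℕ) : Type _ := Fin n → A

/-- `p` is a probability mass function. -/
def IsPMF {α : Type*} (p : α → ℝ) : Prop :=
  (∀ a, 0 ≤ p a) ∧ HasSum p 1

/-- Probability of the event `S` under the pmf `p`. -/
noncomputable def prob {α : Type*} (p : α → ℝ) (S : Set α) : ℝ :=
  ∑' a, S.indicator p a

/-- Output marginal `P_{Yⁿ}` of the channel `W` fed with the joint input law `P_{VⁿXⁿ}`. -/
noncomputable def outDist {𝒱 𝒳 𝒴 : Type*} {n : ℕ}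
    (PVX : Word 𝒱 n × Word 𝒳 n → ℝ) (W : Word 𝒳 n → Word 𝒴 n → ℝ)
    (y : Word 𝒴 n) : ℝ :=
  ∑' vx : Word 𝒱 n × Word 𝒳 n, PVX vx * W vx.2 y

/-- Joint law of `(Vⁿ, Xⁿ, Yⁿ)`: `P_{VⁿXⁿ}(v,x) · Wⁿ(y|x)`. -/
noncomputable def jointLaw {𝒱 𝒳 𝒴 : Type*} {n : ℕ}
    (PVX : Word 𝒱 n × Word 𝒳 n → ℝ) (W : Word 𝒳 n → Word 𝒴 n → ℝ) :
    Word 𝒱 n × Word 𝒳 n × Word 𝒴 n → ℝ :=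
  fun z => PVX (z.1, z.2.1) * W z.2.1 z.2.2

/-- The joint input law `P_{VⁿXⁿ}` induced by the deterministic encoder `φ`:
`P_{Vⁿ}(v) 1{x = φ(v)}`. -/
noncomputable def codeInput {𝒱 𝒳 : Type*} [DecidableEq 𝒳] {n : ℕ} (PV : Word 𝒱 n → ℝ)
    (φ : Word 𝒱 n → Word 𝒳 n) : Word 𝒱 n × Word 𝒳 n → ℝ :=
  fun vx => if vx.2 = φ vx.1 then PV vx.1 else 0

/-- Error probability `εₙ` of the joint source-channel code `(φ, ψ)`. -/
noncomputable def errProb {𝒱 𝒳 𝒴 : Type*} {n : ℕ}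
    (PV : Word 𝒱 n → ℝ) (W : Word 𝒳 n → Word 𝒴 n → ℝ)
    (φ : Word 𝒱 n → Word 𝒳 n) (ψ : Word 𝒴 n → Word 𝒱 n) : ℝ :=
  ∑' v, PV v * prob (W (φ v)) {y | ψ y ≠ v}

/-- `V` is transmissible over `W`. -/
def Transmissible {𝒱 𝒳 𝒴 : Type*} (PV : (n : ℕ) → Word 𝒱 n → ℝ)
    (W : (n : ℕ) → Word 𝒳 n → Word 𝒴 n → ℝ) : Prop :=
  ∃ (φ : (n : ℕ) → Word 𝒱 n → Word 𝒳 n) (ψ : (n : ℕ) → Word 𝒴 n → Word 𝒱 n),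
    Tendsto (fun n => errProb (PV n) (W n) (φ n) (ψ n)) atTop (nhds 0)

/-- Output marginal of the channel `W` for an input distribution `P_{Xⁿ}`. -/
noncomputable def outDistX {𝒳 𝒴 : Type*} {n : ℕ}
    (PX : Word 𝒳 n → ℝ) (W : Word 𝒳 n → Word 𝒴 n → ℝ) (y : Word 𝒴 n) : ℝ :=
  ∑' x : Word 𝒳 n, PX x * W x y

/-- Joint law of `(Xⁿ, Yⁿ)`: `P_{Xⁿ}(x) · Wⁿ(y|x)`. -/
noncomputable def jointXY {𝒳 𝒴 : Type*} {n : ℕ}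
    (PX : Word 𝒳 n → ℝ) (W : Word 𝒳 n → Word 𝒴 n → ℝ) :
    Word 𝒳 n × Word 𝒴 n → ℝ :=
  fun z => PX z.1 * W z.1 z.2

/-- Limit superior in probability of a sequence of random variables `Z i`
distributed according to the pmfs `p i`. -/
noncomputable def plimsup {α : ℕ → Type*} (p : (i : ℕ) → α i → ℝ)
    (Z : (i : ℕ) → α i → ℝ) : EReal :=
  sInf {β : EReal |
    Tendsto (fun i => prob (p i) {a | β < (Z i a : EReal)}) atTop (nhds 0)}

/-- Limit inferior in probability of a sequence of random variables `Z i`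
distributed according to the pmfs `p i`. -/
noncomputable def pliminf {α : ℕ → Type*} (p : (i : ℕ) → α i → ℝ)
    (Z : (i : ℕ) → α i → ℝ) : EReal :=
  sSup {β : EReal |
    Tendsto (fun i => prob (p i) {a | (Z i a : EReal) < β}) atTop (nhds 0)}

/-- Spectral sup-entropy rate `H̄(V)`. -/
noncomputable def Hbar {𝒱 : Type*} (PV : (n : ℕ) → Word 𝒱 n → ℝ) : EReal :=
  plimsup (fun n => PV n) (fun n v => (1 / (n : ℝ)) * Real.log (1 / PV n v))

/-- Spectral inf-entropy rate `H_(V)`. -/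
noncomputable def Hlow {𝒱 : Type*} (PV : (n : ℕ) → Word 𝒱 n → ℝ) : EReal :=
  pliminf (fun n => PV n) (fun n v => (1 / (n : ℝ)) * Real.log (1 / PV n v))

/-- Spectral inf-information rate `I_(X;Y)` of the channel `W` with input `X`. -/
noncomputable def Ilow {𝒳 𝒴 : Type*} (PX : (n : ℕ) → Word 𝒳 n → ℝ)
    (W : (n : ℕ) → Word 𝒳 n → Word 𝒴 n → ℝ) : EReal :=
  pliminf (fun n => jointXY (PX n) (W n))
    (fun n z => (1 / (n : ℝ)) * Real.log (W n z.1 z.2 / outDistX (PX n) (W n) z.2))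

/-- Spectral sup-information rate `Ī(X;Y)` of the channel `W` with input `X`. -/
noncomputable def Ihigh {𝒳 𝒴 : Type*} (PX : (n : ℕ) → Word 𝒳 n → ℝ)
    (W : (n : ℕ) → Word 𝒳 n → Word 𝒴 n → ℝ) : EReal :=
  plimsup (fun n => jointXY (PX n) (W n))
    (fun n z => (1 / (n : ℝ)) * Real.log (W n z.1 z.2 / outDistX (PX n) (W n) z.2))

/-- `sup_X I_(X;Y)`: the supremum over all channel inputs. -/
noncomputable def supIlow {𝒳 𝒴 : Type*}
    (W : (n : ℕ) → Word 𝒳 n → Word 𝒴 n → ℝ) : EReal :=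
  ⨆ PX : {PX : (n : ℕ) → Word 𝒳 n → ℝ // ∀ n, IsPMF (PX n)}, Ilow PX.1 W

/-! Random coding. Draw the codewords `x_v` independently, `x_v` with law `P_{X|V}(·|v)`, and let
the receiver decode `y` to a message `v` with `P_V(v) W(y|x_v) > c P_Y(y)`, where `c = e^{nγₙ}`.
If `v` is sent, an error forces either `P_V(v) W(y|x_v) ≤ c P_Y(y)`, whose average probability is
exactly the one in the hypothesis, or acceptance of some `v' ≠ v`. In the latter case `x_{v'}` is
independent of `y`, so averaging over `v` replaces the law of `y` by `P_Y`; and `P_Y(y) < P_V(v')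
W(y|x_{v'}) / c` on the acceptance region of `v'`, which therefore has `P_Y`-measure at most
`P_V(v') / c`. Summing over `v'`, some codebook has error at most the hypothesised probability
plus `e^{-nγₙ} → 0`. -/

section OneShot

open MeasureTheory
open scoped ENNReal

variable {V X Y : Type*}

theorem tsum_support_mul {α : Type*} (p : PMF α) (g : α → ℝ≥0∞) :
    ∑' a : p.support, p a * g a = ∑' a, p a * g a :=
  tsum_subtype_eq_of_support_subset (f := fun a => p a * g a)
    (Function.support_mul_subset_left _ _)

/-- The law `p` viewed on its support: this reduces an arbitrary alphabet `α` to a countable one. -/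
noncomputable def supportPMF {α : Type*} (p : PMF α) : PMF p.support :=
  ⟨fun a => p a, ENNReal.summable.hasSum_iff.2 ((tsum_subtype_support p).trans p.tsum_coe)⟩

@[simp]
theorem supportPMF_apply {α : Type*} (p : PMF α) (a : p.support) : supportPMF p a = p a := rfl

theorem lintegral_toMeasure_supportPMF {α : Type*} [MeasurableSpace α]
    [DiscreteMeasurableSpace α] (p : PMF α) (g : α → ℝ≥0∞) :
    ∫⁻ a, g a ∂(supportPMF p).toMeasure = ∑' a, p a * g a := by
  have : Countable p.support := p.support_countable.to_subtype
  rw [lintegral_countable', ← tsum_support_mul]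
  refine tsum_congr fun a => ?_
  rw [PMF.toMeasure_apply_singleton _ _ (measurableSet_singleton a), mul_comm]
  rfl

/-- The law of a random codebook: independent draws `ω v`, the `v`-th one with law `q v`. Draws are
taken in the supports, so that every function of finitely many of them is measurable. -/
noncomputable def codebookLaw [MeasurableSpace X] (q : V → PMF X) :
    Measure (∀ v, (q v).support) :=
  Measure.infinitePi fun v => (supportPMF (q v)).toMeasure

theorem lintegral_codebookLaw_eval [MeasurableSpace X] [DiscreteMeasurableSpace X]
    (q : V → PMF X) (v : V) (g : X → ℝ≥0∞) :
    ∫⁻ ω, g (ω v) ∂codebookLaw q = ∑' x, q v x * g x := by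
  rw [← lintegral_toMeasure_supportPMF]
  have : Countable (q v).support := (q v).support_countable.to_subtype
  exact (measurePreserving_eval_infinitePi (fun v => (supportPMF (q v)).toMeasure) v).lintegral_comp
    (f := fun x => g x) Measurable.of_discrete

theorem measurable_codebook_pair [MeasurableSpace X] [DiscreteMeasurableSpace X]
    (q : V → PMF X) (v v' : V) (h : X → X → ℝ≥0∞) :
    Measurable fun ω : ∀ v, (q v).support => h (ω v) (ω v') := by
  have (v : V) : Countable (q v).support := (q v).support_countable.to_subtype
  have hmeas : Measurable fun z : (q v).support × (q v').support => h z.1 z.2 :=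
    Measurable.of_discrete
  have hpair : Measurable fun ω : ∀ v, (q v).support => (ω v, ω v') := by fun_prop
  exact hmeas.comp hpair

theorem lintegral_codebookLaw_pair [MeasurableSpace X] [DiscreteMeasurableSpace X]
    (q : V → PMF X) {v v' : V} (hne : v ≠ v') (h : X → X → ℝ≥0∞) :
    ∫⁻ ω, h (ω v) (ω v') ∂codebookLaw q = ∑' x, q v x * ∑' x', q v' x' * h x x' := by
  have (v : V) : Countable (q v).support := (q v).support_countable.to_subtype
  have hmeas : Measurable fun z : (q v).support × (q v').support => h z.1 z.2 :=
    Measurable.of_discrete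
  have hpair : Measurable fun ω : ∀ v, (q v).support => (ω v, ω v') := by fun_prop
  calc ∫⁻ ω, h (ω v) (ω v') ∂codebookLaw q
      = ∫⁻ z : (q v).support × (q v').support, h z.1 z.2
          ∂(codebookLaw q).map fun ω => (ω v, ω v') :=
        (lintegral_map hmeas hpair).symm
    _ = ∫⁻ x, ∫⁻ x', h x x' ∂(supportPMF (q v')).toMeasure ∂(supportPMF (q v)).toMeasure := by
        rw [codebookLaw, Measure.infinitePi_map_eval_prod hne, lintegral_prod _ hmeas.aemeasurable]
    _ = ∑' x, q v x * ∑' x', q v' x' * h x x' := by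
        simp only [lintegral_toMeasure_supportPMF]
        exact lintegral_toMeasure_supportPMF (q v) fun x => ∑' x', q v' x' * h x x'

theorem exists_codebook_cost_le [Countable V] (q : V → PMF X) (a : V → X → ℝ≥0∞)
    (b : V → V → X → X → ℝ≥0∞) :
    ∃ φ : V → X,
      ∑' v, a v (φ v) + ∑' v, ∑' v' : {v' // v' ≠ v}, b v v' (φ v) (φ v') ≤
        ∑' v, ∑' x, q v x * a v x +
          ∑' v, ∑' v' : {v' // v' ≠ v}, ∑' x, q v x * ∑' x', q v' x' * b v v' x x' := by
  let _ : MeasurableSpace X := ⊤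
  have : DiscreteMeasurableSpace X := ⟨fun _ => trivial⟩
  have : IsProbabilityMeasure (codebookLaw q) := by unfold codebookLaw; infer_instance
  have ha (v : V) : Measurable fun ω : ∀ v, (q v).support => a v (ω v) :=
    measurable_codebook_pair q v v fun x _ => a v x
  have hb (v : V) (v' : {v' // v' ≠ v}) :
      Measurable fun ω : ∀ v, (q v).support => b v v' (ω v) (ω v') :=
    measurable_codebook_pair q v v' (b v v')
  have ha_sum : Measurable fun ω : ∀ v, (q v).support => ∑' v, a v (ω v) := .tsum ha
  have hb_sum (v : V) : Measurable fun ω : ∀ v, (q v).support =>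
      ∑' v' : {v' // v' ≠ v}, b v v' (ω v) (ω v') := .tsum (hb v)
  have hb_sum_sum : Measurable fun ω : ∀ v, (q v).support =>
      ∑' v, ∑' v' : {v' // v' ≠ v}, b v v' (ω v) (ω v') := .tsum hb_sum
  obtain ⟨ω, hω⟩ := exists_le_lintegral (μ := codebookLaw q) (ha_sum.add hb_sum_sum).aemeasurable
  refine ⟨fun v => ω v, hω.trans_eq ?_⟩
  simp only [Pi.add_apply]
  rw [lintegral_add_left ha_sum, lintegral_tsum fun v => (ha v).aemeasurable,
    lintegral_tsum fun v => (hb_sum v).aemeasurable]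
  congr 1
  · exact tsum_congr fun v => lintegral_codebookLaw_eval q v (a v)
  · refine tsum_congr fun v => ?_
    rw [lintegral_tsum fun v' => (hb v v').aemeasurable]
    exact tsum_congr fun v' => lintegral_codebookLaw_pair q v'.2.symm (b v v')

theorem exists_decoder_error_le [Countable V] [Nonempty V] (μ : V → OuterMeasure Y)
    (A : V → Set Y) :
    ∃ ψ : Y → V, ∀ v, μ v {y | ψ y ≠ v} ≤ μ v (A v)ᶜ + ∑' v' : {v' // v' ≠ v}, μ v (A v') := by
  classical
  let ψ : Y → V := fun y => if h : ∃ v, y ∈ A v then h.choose else Classical.arbitrary V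
  have hψ {y : Y} {v : V} (hy : y ∈ A v) : y ∈ A (ψ y) := by
    have h : ∃ v, y ∈ A v := ⟨v, hy⟩
    simpa only [ψ, dif_pos h] using h.choose_spec
  have hcover (v : V) : {y | ψ y ≠ v} ⊆ (A v)ᶜ ∪ ⋃ v' : {v' // v' ≠ v}, A v' := by
    intro y hy
    by_cases hyv : y ∈ A v
    · exact .inr (Set.mem_iUnion.2 ⟨⟨ψ y, hy⟩, hψ hyv⟩)
    · exact .inl hyv
  exact ⟨ψ, fun v => (measure_mono (hcover v)).trans <| (measure_union_le _ _).trans <|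
    add_le_add_right (measure_iUnion_le _) _⟩

/-- The law `P_Y` of the channel output, for source law `p`, random encoder `q` and channel `W`. -/
noncomputable def outputPMF (p : PMF V) (q : V → PMF X) (W : X → PMF Y) : PMF Y :=
  p.bind fun v => (q v).bind W

theorem toOuterMeasure_outputPMF (p : PMF V) (q : V → PMF X) (W : X → PMF Y) (S : Set Y) :
    (outputPMF p q W).toOuterMeasure S =
      ∑' v, p v * ∑' x, q v x * (W x).toOuterMeasure S := by
  simp only [outputPMF, PMF.toOuterMeasure_bind_apply]

theorem tsum_confusion_le (p : PMF V) (q : V → PMF X) (W : X → PMF Y) (A : V → X → Set Y) :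
    ∑' v, ∑' v' : {v' // v' ≠ v}, ∑' x, q v x * ∑' x', q v' x' *
        (p v * (W x).toOuterMeasure (A v' x')) ≤
      ∑' v', ∑' x', q v' x' * (outputPMF p q W).toOuterMeasure (A v' x') := by
  calc _ ≤ ∑' v, ∑' v', ∑' x, q v x * ∑' x', q v' x' *
        (p v * (W x).toOuterMeasure (A v' x')) :=
        ENNReal.tsum_le_tsum fun v =>
          ENNReal.tsum_comp_le_tsum_of_injective Subtype.val_injective _
    _ = ∑' v', ∑' v, ∑' x', ∑' x, q v x * (q v' x' *
        (p v * (W x).toOuterMeasure (A v' x'))) := by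
        rw [ENNReal.tsum_comm]
        simp only [← ENNReal.tsum_mul_left]
        exact tsum_congr fun v' => tsum_congr fun v => ENNReal.tsum_comm
    _ = ∑' v', ∑' x', ∑' v, ∑' x, q v x * (q v' x' *
        (p v * (W x).toOuterMeasure (A v' x'))) :=
        tsum_congr fun v' => ENNReal.tsum_comm
    _ = ∑' v', ∑' x', q v' x' * (outputPMF p q W).toOuterMeasure (A v' x') := by
        simp only [toOuterMeasure_outputPMF, ← ENNReal.tsum_mul_left]
        refine tsum_congr fun v' => tsum_congr fun x' => tsum_congr fun v => tsum_congr fun x => ?_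
        ring

theorem exists_code_error_le [Countable V] (p : PMF V) (q : V → PMF X) (W : X → PMF Y)
    (A : V → X → Set Y) :
    ∃ (φ : V → X) (ψ : Y → V),
      ∑' v, p v * (W (φ v)).toOuterMeasure {y | ψ y ≠ v} ≤
        ∑' v, p v * ∑' x, q v x * (W x).toOuterMeasure (A v x)ᶜ +
          ∑' v, ∑' x, q v x * (outputPMF p q W).toOuterMeasure (A v x) := by
  have : Nonempty V := p.support_nonempty.to_type
  obtain ⟨φ, hφ⟩ := exists_codebook_cost_le q
    (fun v x => p v * (W x).toOuterMeasure (A v x)ᶜ)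
    (fun v v' x x' => p v * (W x).toOuterMeasure (A v' x'))
  obtain ⟨ψ, hψ⟩ := exists_decoder_error_le (fun v => (W (φ v)).toOuterMeasure)
    (fun v => A v (φ v))
  refine ⟨φ, ψ, ?_⟩
  calc ∑' v, p v * (W (φ v)).toOuterMeasure {y | ψ y ≠ v}
      ≤ ∑' v, p v * ((W (φ v)).toOuterMeasure (A v (φ v))ᶜ +
          ∑' v' : {v' // v' ≠ v}, (W (φ v)).toOuterMeasure (A v' (φ v'))) := by
        gcongr with v
        exact hψ v
    _ = ∑' v, p v * (W (φ v)).toOuterMeasure (A v (φ v))ᶜ +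
          ∑' v, ∑' v' : {v' // v' ≠ v}, p v * (W (φ v)).toOuterMeasure (A v' (φ v')) := by
        simp only [mul_add, ENNReal.tsum_add, ENNReal.tsum_mul_left]
    _ ≤ _ := hφ
    _ ≤ ∑' v, p v * ∑' x, q v x * (W x).toOuterMeasure (A v x)ᶜ +
          ∑' v, ∑' x, q v x * (outputPMF p q W).toOuterMeasure (A v x) := by
        refine add_le_add (le_of_eq ?_) (tsum_confusion_le p q W A)
        simp only [mul_left_comm (q _ _), ENNReal.tsum_mul_left]

theorem toOuterMeasure_setOf_mul_lt_le (μ ν : PMF Y) {a : ℝ≥0∞} (ha : a ≠ ∞) (c : ℝ≥0∞) :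
    μ.toOuterMeasure {y | c * μ y < a * ν y} ≤ a / c := by
  have hpoint (y : Y) : {y | c * μ y < a * ν y}.indicator μ y ≤ a / c * ν y := by
    refine Set.indicator_apply_le' (fun hy => ?_) fun _ => zero_le
    rw [← ENNReal.mul_div_right_comm, ENNReal.le_div_iff_mul_le, mul_comm]
    · exact hy.le
    · exact .inr (ne_bot_of_gt hy)
    · exact .inr (ENNReal.mul_ne_top ha (ν.apply_ne_top y))
  calc μ.toOuterMeasure {y | c * μ y < a * ν y}
      ≤ ∑' y, a / c * ν y := by
        rw [PMF.toOuterMeasure_apply]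
        exact ENNReal.tsum_le_tsum hpoint
    _ = a / c := by rw [ENNReal.tsum_mul_left, ν.tsum_coe, mul_one]

theorem exists_code_error_le_add_inv_of_countable [Countable V] (p : PMF V) (q : V → PMF X)
    (W : X → PMF Y) (c : ℝ≥0∞) :
    ∃ (φ : V → X) (ψ : Y → V),
      ∑' v, p v * (W (φ v)).toOuterMeasure {y | ψ y ≠ v} ≤
        ∑' v, p v * ∑' x, q v x *
          (W x).toOuterMeasure {y | p v * W x y ≤ c * outputPMF p q W y} + c⁻¹ := by
  obtain ⟨φ, ψ, h⟩ := exists_code_error_le p q W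
    fun v x => {y | c * outputPMF p q W y < p v * W x y}
  refine ⟨φ, ψ, h.trans (add_le_add (le_of_eq ?_) ?_)⟩
  · simp only [Set.compl_ofPred, not_lt]
  · calc ∑' v, ∑' x, q v x * (outputPMF p q W).toOuterMeasure
          {y | c * outputPMF p q W y < p v * W x y}
        ≤ ∑' v, ∑' x, q v x * (p v / c) := by
          gcongr with v x
          exact toOuterMeasure_setOf_mul_lt_le _ _ (p.apply_ne_top v) c
      _ = c⁻¹ := by
          simp only [ENNReal.tsum_mul_right, PMF.tsum_coe, one_mul, div_eq_mul_inv]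

theorem exists_code_error_le_add_inv (p : PMF V) (q : V → PMF X) (W : X → PMF Y) (c : ℝ≥0∞) :
    ∃ (φ : V → X) (ψ : Y → V),
      ∑' v, p v * (W (φ v)).toOuterMeasure {y | ψ y ≠ v} ≤
        ∑' v, p v * ∑' x, q v x *
          (W x).toOuterMeasure {y | p v * W x y ≤ c * outputPMF p q W y} + c⁻¹ := by
  have : Countable p.support := p.support_countable.to_subtype
  obtain ⟨v₀, -⟩ := p.support_nonempty
  obtain ⟨x₀, -⟩ := (q v₀).support_nonempty
  obtain ⟨φ, ψ, h⟩ :=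
    exists_code_error_le_add_inv_of_countable (supportPMF p) (fun v => q v) W c
  have houtput : outputPMF (supportPMF p) (fun v => q v) W = outputPMF p q W :=
    PMF.ext fun y => tsum_support_mul p fun v => (q v).bind W y
  refine ⟨Function.extend Subtype.val φ fun _ => x₀, fun y => ψ y, ?_⟩
  rw [houtput] at h
  rw [← tsum_support_mul, ← tsum_support_mul]
  simpa only [supportPMF_apply, Subtype.val_injective.extend_apply, ne_eq, Subtype.ext_iff] using h

theorem exists_conditionalPMF (p : PMF V) (r : V → X → ℝ≥0∞) (hr : ∀ v, ∑' x, r v x = p v) :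
    ∃ q : V → PMF X, ∀ v x, p v * q v x = r v x := by
  have : Nonempty X := by
    obtain ⟨v, hv⟩ := p.support_nonempty
    by_contra hX
    rw [not_nonempty_iff] at hX
    exact hv (by rw [← hr v, tsum_empty])
  refine ⟨fun v => if h : p v = 0 then PMF.pure (Classical.arbitrary X) else
    PMF.normalize (r v) (by rwa [hr]) (by rw [hr]; exact p.apply_ne_top v), fun v x => ?_⟩
  dsimp only
  split_ifs with hv
  · have hrv : ∑' x, r v x = 0 := (hr v).trans hv
    rw [hv, zero_mul, ENNReal.tsum_eq_zero.1 hrv x]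
  · rw [PMF.normalize_apply, hr, mul_left_comm, ENNReal.mul_inv_cancel hv (p.apply_ne_top v),
      mul_one]

end OneShot

section RealValued

variable {α : Type*} {p : α → ℝ}

theorem isPMF_of_tsum_ofReal_eq_one (hp : ∀ a, 0 ≤ p a) (h : ∑' a, ENNReal.ofReal (p a) = 1) :
    IsPMF p := by
  have hsum : Summable p :=
    (ENNReal.summable_toReal (h.trans_ne ENNReal.one_ne_top)).congr fun a =>
      ENNReal.toReal_ofReal (hp a)
  refine ⟨hp, (hsum.hasSum_iff).2 ?_⟩
  rw [← ENNReal.ofReal_eq_one, ENNReal.ofReal_tsum_of_nonneg hp hsum, h]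

theorem IsPMF.tsum_ofReal (hp : IsPMF p) : ∑' a, ENNReal.ofReal (p a) = 1 := by
  rw [← ENNReal.ofReal_tsum_of_nonneg hp.1 hp.2.summable, hp.2.tsum_eq, ENNReal.ofReal_one]

/-- The `PMF` with the same point masses as the real-valued mass function `p`. -/
noncomputable def IsPMF.toPMF (hp : IsPMF p) : PMF α :=
  ⟨fun a => ENNReal.ofReal (p a), ENNReal.summable.hasSum_iff.2 hp.tsum_ofReal⟩

@[simp]
theorem IsPMF.toPMF_apply (hp : IsPMF p) (a : α) : hp.toPMF a = ENNReal.ofReal (p a) := rfl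

theorem IsPMF.le_one (hp : IsPMF p) (a : α) : p a ≤ 1 := le_hasSum hp.2 a fun b _ => hp.1 b

theorem IsPMF.prob_nonneg (hp : IsPMF p) (S : Set α) : 0 ≤ prob p S :=
  tsum_nonneg fun a => Set.indicator_nonneg (fun b _ => hp.1 b) a

theorem IsPMF.ofReal_prob (hp : IsPMF p) (S : Set α) :
    ENNReal.ofReal (prob p S) = hp.toPMF.toOuterMeasure S := by
  rw [prob, ENNReal.ofReal_tsum_of_nonneg (Set.indicator_nonneg fun a _ => hp.1 a)
    (hp.2.summable.indicator S), PMF.toOuterMeasure_apply]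
  exact tsum_congr (congrFun (Set.indicator_comp_of_zero ENNReal.ofReal_zero).symm)

theorem IsPMF.prob_le_one (hp : IsPMF p) (S : Set α) : prob p S ≤ 1 :=
  hasSum_le (Set.indicator_le_self' fun a _ => hp.1 a)
    (hp.2.summable.indicator S).hasSum hp.2

variable {𝒱 𝒳 𝒴 : Type*} {n : ℕ} {PV : Word 𝒱 n → ℝ} {W : Word 𝒳 n → Word 𝒴 n → ℝ}
  {PVX : Word 𝒱 n × Word 𝒳 n → ℝ}

theorem IsPMF.jointLaw (hPVX : IsPMF PVX) (hW : ∀ x, IsPMF (W x)) : IsPMF (jointLaw PVX W) := by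
  refine isPMF_of_tsum_ofReal_eq_one (fun z => mul_nonneg (hPVX.1 _) ((hW _).1 _)) ?_
  calc ∑' z, ENNReal.ofReal (ISC.jointLaw PVX W z)
      = ∑' v, ∑' x, ENNReal.ofReal (PVX (v, x)) * ∑' y, ENNReal.ofReal (W x y) := by
        simp only [ISC.jointLaw, ENNReal.tsum_prod', ENNReal.ofReal_mul (hPVX.1 _),
          ENNReal.tsum_mul_left]
    _ = 1 := by
        simp only [(hW _).tsum_ofReal, mul_one, ← ENNReal.tsum_prod, hPVX.tsum_ofReal]

theorem ofReal_prob_jointLaw (hPVX : IsPMF PVX) (hW : ∀ x, IsPMF (W x))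
    (S : Set (Word 𝒱 n × Word 𝒳 n × Word 𝒴 n)) :
    ENNReal.ofReal (prob (jointLaw PVX W) S) =
      ∑' v, ∑' x, ENNReal.ofReal (PVX (v, x)) *
        (hW x).toPMF.toOuterMeasure {y | (v, x, y) ∈ S} := by
  classical
  rw [(hPVX.jointLaw hW).ofReal_prob, PMF.toOuterMeasure_apply]
  simp only [ENNReal.tsum_prod', PMF.toOuterMeasure_apply, ← ENNReal.tsum_mul_left]
  refine tsum_congr fun v => tsum_congr fun x => tsum_congr fun y => ?_
  simp only [Set.indicator_apply, IsPMF.toPMF_apply, Set.mem_ofPred_eq, mul_ite, mul_zero,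
    jointLaw, ENNReal.ofReal_mul (hPVX.1 _)]

theorem summable_outDist (hPVX : IsPMF PVX) (hW : ∀ x, IsPMF (W x)) (y : Word 𝒴 n) :
    Summable fun vx : Word 𝒱 n × Word 𝒳 n => PVX vx * W vx.2 y :=
  hPVX.2.summable.of_nonneg_of_le (fun vx => mul_nonneg (hPVX.1 vx) ((hW vx.2).1 y))
    fun vx => mul_le_of_le_one_right (hPVX.1 vx) ((hW vx.2).le_one y)

theorem outDist_pos (hPVX : IsPMF PVX) (hW : ∀ x, IsPMF (W x)) {v : Word 𝒱 n} {x : Word 𝒳 n}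
    {y : Word 𝒴 n} (hvx : 0 < PVX (v, x)) (hxy : 0 < W x y) : 0 < outDist PVX W y :=
  (summable_outDist hPVX hW y).tsum_pos
    (fun vx => mul_nonneg (hPVX.1 vx) ((hW vx.2).1 y)) (v, x) (mul_pos hvx hxy)

theorem ofReal_outDist (hPV : IsPMF PV) (hPVX : IsPMF PVX) (hW : ∀ x, IsPMF (W x))
    {q : Word 𝒱 n → PMF (Word 𝒳 n)}
    (hq : ∀ v x, hPV.toPMF v * q v x = ENNReal.ofReal (PVX (v, x))) (y : Word 𝒴 n) :
    ENNReal.ofReal (outDist PVX W y) = outputPMF hPV.toPMF q (fun x => (hW x).toPMF) y := by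
  rw [outDist, ENNReal.ofReal_tsum_of_nonneg (fun vx => mul_nonneg (hPVX.1 vx) ((hW vx.2).1 y))
    (summable_outDist hPVX hW y), ENNReal.tsum_prod']
  simp only [outputPMF, PMF.bind_apply, ← ENNReal.tsum_mul_left, ← mul_assoc, hq,
    ENNReal.ofReal_mul (hPVX.1 _), (hW _).toPMF_apply]

variable (φ : Word 𝒱 n → Word 𝒳 n) (ψ : Word 𝒴 n → Word 𝒱 n)

theorem errProb_nonneg (hPV : IsPMF PV) (hW : ∀ x, IsPMF (W x)) : 0 ≤ errProb PV W φ ψ :=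
  tsum_nonneg fun v => mul_nonneg (hPV.1 v) ((hW _).prob_nonneg _)

theorem ofReal_errProb (hPV : IsPMF PV) (hW : ∀ x, IsPMF (W x)) :
    ENNReal.ofReal (errProb PV W φ ψ) =
      ∑' v, hPV.toPMF v * (hW (φ v)).toPMF.toOuterMeasure {y | ψ y ≠ v} := by
  have hnonneg (v : Word 𝒱 n) : 0 ≤ PV v * prob (W (φ v)) {y | ψ y ≠ v} :=
    mul_nonneg (hPV.1 v) ((hW _).prob_nonneg _)
  have hsum : Summable fun v => PV v * prob (W (φ v)) {y | ψ y ≠ v} :=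
    hPV.2.summable.of_nonneg_of_le hnonneg
      fun v => mul_le_of_le_one_right (hPV.1 v) ((hW _).prob_le_one _)
  rw [errProb, ENNReal.ofReal_tsum_of_nonneg hnonneg hsum]
  simp only [ENNReal.ofReal_mul (hPV.1 _), (hW _).ofReal_prob, IsPMF.toPMF_apply]

theorem log_div_le_log_inv_add_iff {a w o : ℝ} (ha : 0 < a) (hw : 0 < w) (ho : 0 < o) (t : ℝ) :
    log (w / o) ≤ log (1 / a) + t ↔ a * w ≤ exp t * o := by
  rw [log_le_iff_le_exp (div_pos hw ho), exp_add, exp_log (one_div_pos.2 ha), div_le_iff₀ ho,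
    mul_assoc, one_div, le_inv_mul_iff₀ ha]

theorem toOuterMeasure_threshold_le (hPV : IsPMF PV) (hPVX : IsPMF PVX) (hW : ∀ x, IsPMF (W x))
    {v : Word 𝒱 n} {x : Word 𝒳 n} (hv : 0 < PV v) (hvx : 0 < PVX (v, x)) (t : ℝ) :
    (hW x).toPMF.toOuterMeasure {y | hPV.toPMF v * (hW x).toPMF y ≤
        ENNReal.ofReal (exp t) * ENNReal.ofReal (outDist PVX W y)} ≤
      (hW x).toPMF.toOuterMeasure
        {y | log (W x y / outDist PVX W y) ≤ log (1 / PV v) + t} := by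
  refine PMF.toOuterMeasure_mono _ fun y hy => ?_
  obtain ⟨hle, hsupp⟩ := hy
  have hxy : 0 < W x y := ENNReal.ofReal_pos.1 (pos_iff_ne_zero.2 hsupp)
  have ho : 0 < outDist PVX W y := outDist_pos hPVX hW hvx hxy
  refine (log_div_le_log_inv_add_iff hv hxy ho t).2 ?_
  rwa [Set.mem_ofPred_eq, IsPMF.toPMF_apply, IsPMF.toPMF_apply, ← ENNReal.ofReal_mul hv.le,
    ← ENNReal.ofReal_mul (exp_pos t).le, ENNReal.ofReal_le_ofReal_iff (by positivity)] at hle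

theorem exists_code_errProb_le (hPV : IsPMF PV) (hW : ∀ x, IsPMF (W x)) (hPVX : IsPMF PVX)
    (hmarg : ∀ v, ∑' x, PVX (v, x) = PV v) (t : ℝ) :
    ∃ (φ : Word 𝒱 n → Word 𝒳 n) (ψ : Word 𝒴 n → Word 𝒱 n),
      errProb PV W φ ψ ≤
        prob (jointLaw PVX W)
          {z | log (W z.2.1 z.2.2 / outDist PVX W z.2.2) ≤ log (1 / PV z.1) + t} + exp (-t) := by
  have hr (v : Word 𝒱 n) : ∑' x, ENNReal.ofReal (PVX (v, x)) = hPV.toPMF v := by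
    rw [← ENNReal.ofReal_tsum_of_nonneg (fun x => hPVX.1 (v, x))
      (hPVX.2.summable.prod_factor v), hmarg, IsPMF.toPMF_apply]
  obtain ⟨q, hq⟩ := exists_conditionalPMF hPV.toPMF (fun v x => ENNReal.ofReal (PVX (v, x))) hr
  obtain ⟨φ, ψ, h⟩ := exists_code_error_le_add_inv hPV.toPMF q (fun x => (hW x).toPMF)
    (ENNReal.ofReal (exp t))
  refine ⟨φ, ψ, ?_⟩
  have hprob := (hPVX.jointLaw hW).prob_nonneg
    {z | log (W z.2.1 z.2.2 / outDist PVX W z.2.2) ≤ log (1 / PV z.1) + t}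
  rw [← ENNReal.ofReal_le_ofReal_iff (by positivity), ENNReal.ofReal_add hprob (exp_pos _).le,
    ofReal_errProb φ ψ hPV hW, ofReal_prob_jointLaw hPVX hW, exp_neg,
    ENNReal.ofReal_inv_of_pos (exp_pos t)]
  refine h.trans (add_le_add_left ?_ _)
  simp only [← ofReal_outDist hPV hPVX hW hq, ← ENNReal.tsum_mul_left, ← mul_assoc, hq]
  refine ENNReal.tsum_le_tsum fun v => ENNReal.tsum_le_tsum fun x => ?_
  obtain hvx | hvx := (hPVX.1 (v, x)).eq_or_lt
  · simp only [← hvx, ENNReal.ofReal_zero, zero_mul, le_refl]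
  · have hv : 0 < PV v := by
      rw [← hmarg v]
      exact (hPVX.2.summable.prod_factor v).tsum_pos (fun x => hPVX.1 (v, x)) x hvx
    gcongr ENNReal.ofReal (PVX (v, x)) * ?_
    exact toOuterMeasure_threshold_le hPV hPVX hW hv hvx t

end RealValued

theorem limsup_le_limsup_of_le_add_tendsto_zero {ι : Type*} {l : Filter ι} {u v e : ι → ℝ}
    (hu : l.IsCoboundedUnder (· ≤ ·) u) (hv : l.IsBoundedUnder (· ≤ ·) v)
    (hle : ∀ᶠ i in l, u i ≤ v i + e i) (he : Tendsto e l (𝓝 0)) : limsup u l ≤ limsup v l := by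
  refine le_of_forall_pos_le_add fun δ hδ => limsup_le_of_le hu ?_
  have hv_lt : ∀ᶠ i in l, v i < limsup v l + δ / 2 :=
    eventually_lt_of_limsup_lt (lt_add_of_pos_right _ (half_pos hδ)) hv
  have he_lt : ∀ᶠ i in l, e i < δ / 2 := he.eventually_lt_const (half_pos hδ)
  filter_upwards [hle, hv_lt, he_lt] with i hle hv_lt he_lt
  linarith

theorem eps_direct_theorem_general {𝒱 𝒳 𝒴 : Type*} (ε : ℝ)
    (PV : (n : ℕ) → Word 𝒱 n → ℝ) (hPV : ∀ n, IsPMF (PV n))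
    (W : (n : ℕ) → Word 𝒳 n → Word 𝒴 n → ℝ) (hW : ∀ n x, IsPMF (W n x))
    (PVX : (n : ℕ) → Word 𝒱 n × Word 𝒳 n → ℝ) (hPVX : ∀ n, IsPMF (PVX n))
    (hmarg : ∀ n v, ∑' x : Word 𝒳 n, PVX n (v, x) = PV n v)
    (γ : ℕ → ℝ) (hnγ : Tendsto (fun n : ℕ => (n : ℝ) * γ n) atTop atTop)
    (hspec : limsup (fun n =>
        prob (jointLaw (PVX n) (W n))
          {z | (1 / (n : ℝ)) * log (W n z.2.1 z.2.2 / outDist (PVX n) (W n) z.2.2) ≤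
            (1 / (n : ℝ)) * log (1 / PV n z.1) + γ n}) atTop ≤ ε) :
    ∃ (φ : (n : ℕ) → Word 𝒱 n → Word 𝒳 n) (ψ : (n : ℕ) → Word 𝒴 n → Word 𝒱 n),
      limsup (fun n => errProb (PV n) (W n) (φ n) (ψ n)) atTop ≤ ε := by
  choose φ ψ hcode using fun n =>
    exists_code_errProb_le (hPV n) (hW n) (hPVX n) (hmarg n) (n * γ n)
  have hscale {n : ℕ} (hn : 0 < n) (a b : ℝ) :
      1 / (n : ℝ) * a ≤ 1 / (n : ℝ) * b + γ n ↔ a ≤ b + n * γ n := by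
    have hn' : (0 : ℝ) < n := Nat.cast_pos.2 hn
    rw [← mul_le_mul_iff_right₀ hn']
    field_simp
  refine ⟨φ, ψ, le_trans (limsup_le_limsup_of_le_add_tendsto_zero ?_ ?_ ?_
    (tendsto_exp_neg_atTop_nhds_zero.comp hnγ)) hspec⟩
  · exact (isBoundedUnder_of
      ⟨0, fun n => errProb_nonneg _ _ (hPV n) (hW n)⟩).isCoboundedUnder_le
  · exact isBoundedUnder_of ⟨1, fun n => ((hPVX n).jointLaw (hW n)).prob_le_one _⟩
  · filter_upwards [eventually_gt_atTop 0] with n hn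
    simpa only [hscale hn, Function.comp_apply] using hcode n

/-- **ε-Direct theorem** (Theorem 5.1). -/
theorem eps_direct_theorem
    {𝒱 𝒳 𝒴 : Type} [Countable 𝒱] [Countable 𝒳] [Countable 𝒴]
    (ε : ℝ) (hε0 : 0 ≤ ε) (hε1 : ε < 1)
    (PV : (n : ℕ) → Word 𝒱 n → ℝ) (hPV : ∀ n, IsPMF (PV n))
    (W : (n : ℕ) → Word 𝒳 n → Word 𝒴 n → ℝ) (hW : ∀ n x, IsPMF (W n x))
    (PVX : (n : ℕ) → Word 𝒱 n × Word 𝒳 n → ℝ) (hPVX : ∀ n, IsPMF (PVX n))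
    (hmarg : ∀ n v, (∑' x : Word 𝒳 n, PVX n (v, x)) = PV n v)
    (γ : ℕ → ℝ) (hγpos : ∀ n, 0 < γ n)
    (hγ0 : Tendsto γ atTop (nhds 0))
    (hnγ : Tendsto (fun n : ℕ => (n : ℝ) * γ n) atTop atTop)
    (hspec : Filter.limsup (fun n =>
        prob (jointLaw (PVX n) (W n))
          {z : Word 𝒱 n × Word 𝒳 n × Word 𝒴 n |
            (1 / (n : ℝ)) * Real.log (W n z.2.1 z.2.2 / outDist (PVX n) (W n) z.2.2) ≤
              (1 / (n : ℝ)) * Real.log (1 / PV n z.1) + γ n}) atTop ≤ ε) :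
    ∃ (φ : (n : ℕ) → Word 𝒱 n → Word 𝒳 n) (ψ : (n : ℕ) → Word 𝒴 n → Word 𝒱 n),
      Filter.limsup (fun n => errProb (PV n) (W n) (φ n) (ψ n)) atTop ≤ ε :=
  eps_direct_theorem_general ε PV hPV W hW PVX hPVX hmarg γ hnγ hspec

end ISC
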